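/- Let X be a set, f : X → X a map, k a natural number, and U₁, …, U_k subsets of X such that for every i ∈ {1,…,k} and every integer n ≥ 1 the image f^n(U_i) is disjoint from U_i. Then for every point z ∈ X and every integer ℓ ≥ 1 there exists an integer j ≥ 1 such that f^{jℓ}(z) does not lie in U₁ ∪ ⋯ ∪ U_k. -/

import Mathlib

open Filter

/-- A set is wandering for `f` if no point of it ever returns to it under iteration of `f`. This is
phrased through forward images; equivalently, `U` is disjoint from each of its preimages under
`f^[n]`, `n ≥ 1`. -/
def IsWandering {X : Type*} (f : X → X) (U : Set X) : Prop :=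
  ∀ n : ℕ, 1 ≤ n → Disjoint (f^[n] '' U) U

namespace IsWandering

variable {X : Type*} {f : X → X}

theorem iterate_notMem {U : Set X} (hU : IsWandering f U) {x : X} (hx : x ∈ U) {n : ℕ}
    (hn : 1 ≤ n) : f^[n] x ∉ U :=
  Set.disjoint_left.mp (hU n hn) (Set.mem_image_of_mem _ hx)

theorem subsingleton_setOf_iterate_mem {U : Set X} (hU : IsWandering f U) (z : X) :
    {n : ℕ | f^[n] z ∈ U}.Subsingleton := by
  have le_of_visits {m n : ℕ} (hm : f^[m] z ∈ U) (hn : f^[n] z ∈ U) : n ≤ m := by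
    by_contra! hmn
    have return_eq : f^[n - m] (f^[m] z) = f^[n] z := by
      rw [← Function.iterate_add_apply, Nat.sub_add_cancel hmn.le]
    exact hU.iterate_notMem hm (Nat.sub_pos_of_lt hmn) (return_eq ▸ hn)
  exact fun m hm n hn => le_antisymm (le_of_visits hn hm) (le_of_visits hm hn)

variable {ι : Type*} [Finite ι] {U : ι → Set X}

theorem finite_setOf_iterate_mem_iUnion (hU : ∀ i, IsWandering f (U i)) (z : X) :
    {n : ℕ | f^[n] z ∈ ⋃ i, U i}.Finite := by
  simp only [Set.mem_iUnion, Set.ofPred_exists]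
  exact Set.finite_iUnion fun i => ((hU i).subsingleton_setOf_iterate_mem z).finite

theorem eventually_iterate_notMem_iUnion (hU : ∀ i, IsWandering f (U i)) (z : X) :
    ∀ᶠ n in atTop, f^[n] z ∉ ⋃ i, U i :=
  Nat.cofinite_eq_atTop ▸ (finite_setOf_iterate_mem_iUnion hU z).eventually_cofinite_notMem

end IsWandering

theorem stmt_9
    {X : Type*} (f : X → X) (k : ℕ) (U : Fin k → Set X)
    (hU : ∀ i : Fin k, ∀ n : ℕ, 1 ≤ n → Disjoint (f^[n] '' U i) (U i)) :
    ∀ z : X, ∀ ℓ : ℕ, 1 ≤ ℓ → ∃ j : ℕ, 1 ≤ j ∧ f^[j * ℓ] z ∉ ⋃ i, U i := by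
  intro z ℓ hℓ
  have times_tendsto : Tendsto (fun j : ℕ => j * ℓ) atTop atTop :=
    tendsto_id.atTop_mul_const' hℓ
  have eventually_outside : ∀ᶠ j : ℕ in atTop, f^[j * ℓ] z ∉ ⋃ i, U i :=
    times_tendsto.eventually (IsWandering.eventually_iterate_notMem_iUnion hU z)
  exact ((eventually_ge_atTop 1).and eventually_outside).exists
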